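/- Let p be a positive integer and q1 > q2 > q3 > q4 ≥ 1 be integers with gcd(p, q_i) = 1 for i = 1,2,3,4. If the four rational Beatty sequences S(p/q_i, β_i), i = 1,2,3,4, form a disjoint covering system of the integers, then q1 = 2·q2. -/

import Mathlib

/-- The Beatty sequence `S(α, β) = {⌊α n + β⌋ : n ∈ ℤ}`. -/
def beattySet (α β : ℝ) : Set ℤ :=
  {m : ℤ | ∃ n : ℤ, m = ⌊α * n + β⌋}

lemma mem_beatty (p q : ℕ) (hp : 0 < p) (hq : 0 < q) (β : ℝ) (m : ℤ) :
    m ∈ beattySet ((p:ℝ)/(q:ℝ)) β ↔ (-((q:ℤ) * m + ⌈-((q:ℝ) * β)⌉)) % (p:ℤ) < q := by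
  have hq' : (0:ℝ) < q := by exact_mod_cast hq
  have hp' : (0:ℤ) < p := by exact_mod_cast hp
  have key : ∀ n : ℤ, m = ⌊(p:ℝ)/(q:ℝ) * n + β⌋ ↔
      ((q:ℤ) * m + ⌈-((q:ℝ) * β)⌉ ≤ p * n ∧ p * n < (q:ℤ) * m + ⌈-((q:ℝ) * β)⌉ + q) := by
    intro n
    have e1 : (q:ℤ) * m + ⌈-((q:ℝ) * β)⌉ = ⌈-((q:ℝ) * β) + ((q * m : ℤ) : ℝ)⌉ := by
      rw [Int.ceil_add_intCast]; ring
    have e2 : (q:ℤ) * m + ⌈-((q:ℝ) * β)⌉ + q = ⌈-((q:ℝ) * β) + ((q * m + q : ℤ) : ℝ)⌉ := by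
      rw [Int.ceil_add_intCast]; ring
    rw [e2, e1, Int.ceil_le, Int.lt_ceil, eq_comm, Int.floor_eq_iff]
    push_cast
    have e3 : (p:ℝ)/q * n + β = (p * n + q * β)/q := by field_simp
    rw [e3, le_div_iff₀ hq', div_lt_iff₀ hq']
    constructor <;> rintro ⟨h1, h2⟩ <;> constructor <;> nlinarith
  set c := ⌈-((q:ℝ) * β)⌉
  simp only [beattySet, Set.mem_ofPred_eq, key]
  set v := (q:ℤ) * m + c
  constructor
  · rintro ⟨n, h1, h2⟩
    have h3 : (-v) % (p:ℤ) = (p * n - v) % p := by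
      rw [show (p:ℤ) * n - v = -v + p * n by ring, Int.add_mul_emod_self_left]
    rw [h3]
    rcases lt_or_ge (p * n - v) (p:ℤ) with h | h
    · rw [Int.emod_eq_of_lt (by linarith) h]; linarith
    · have := Int.emod_lt_of_pos (p * n - v) hp'
      linarith
  · intro h
    have h0 := Int.emod_nonneg (-v) hp'.ne'
    have h1 := Int.emod_add_mul_ediv (-v) p
    refine ⟨-((-v) / p), ?_, ?_⟩ <;> linarith

/-- residue class set -/
def bset (p : ℕ) [NeZero p] (q : ℕ) (c : ℤ) : Finset (ZMod p) :=
  Finset.univ.filter (fun m => (-((q : ZMod p) * m + c)).val < q)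

lemma mem_bset (p : ℕ) [NeZero p] (q : ℕ) (c m : ℤ) :
    (m : ZMod p) ∈ bset p q c ↔ (-((q:ℤ) * m + c)) % (p:ℤ) < q := by
  have : (-((q : ZMod p) * (m : ZMod p) + c)) = ((-((q:ℤ) * m + c) : ℤ) : ZMod p) := by
    push_cast; ring
  rw [bset, Finset.mem_filter, this, ← ZMod.val_intCast]
  simp only [Finset.mem_univ, true_and, Nat.cast_lt]

lemma sum_bset (p : ℕ) [NeZero p] (q : ℕ) (c : ℤ) (hq : q ≤ p) (r : ZMod p)
    (hr : (q : ZMod p) * r = 1) (f : ZMod p → ℂ) :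
    ∑ m ∈ bset p q c, f m = ∑ j ∈ Finset.range q, f (-(r * (c + j))) := by
  symm
  refine Finset.sum_bij' (fun j _ => -(r * (c + j))) (fun m _ => (-((q : ZMod p) * m + c)).val)
    ?_ ?_ ?_ ?_ ?_
  · intro j hj
    have hj := Finset.mem_range.1 hj
    have e : (-((q : ZMod p) * (-(r * (c + j))) + c)) = (j : ZMod p) := by
      linear_combination (c + j) * hr
    simp only [bset, Finset.mem_filter, Finset.mem_univ, true_and, e]
    rw [ZMod.val_cast_of_lt (by omega)]; exact hj
  · intro m hm
    simp only [bset, Finset.mem_filter, Finset.mem_univ, true_and] at hm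
    exact Finset.mem_range.2 hm
  · intro j hj
    have hj := Finset.mem_range.1 hj
    have e : (-((q : ZMod p) * (-(r * (c + j))) + c)) = (j : ZMod p) := by
      linear_combination (c + j) * hr
    simp only [e]
    rw [ZMod.val_cast_of_lt (by omega)]
  · intro m hm
    simp only [ZMod.natCast_zmod_val]
    linear_combination m * hr
  · intro j hj; rfl

/-- distance from 1 -/
noncomputable def NN (p : ℕ) [NeZero p] (t : ZMod p) : ℝ := ‖ZMod.stdAddChar t - 1‖

lemma NN_neg (p : ℕ) [NeZero p] (t : ZMod p) : NN p (-t) = NN p t := by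
  unfold NN
  have h : (ZMod.stdAddChar (-t) : ℂ) * ZMod.stdAddChar t = 1 := by
    rw [← AddChar.map_add_eq_mul]; simp
  have h2 : (ZMod.stdAddChar (-t) : ℂ) - 1 = - (ZMod.stdAddChar (-t) * (ZMod.stdAddChar t - 1)) := by
    rw [mul_sub, h]; ring
  rw [h2, norm_neg, norm_mul]
  have : ‖(ZMod.stdAddChar (-t) : ℂ)‖ = 1 := AddChar.norm_apply _ _
  rw [this, one_mul]

lemma NN_nat (p : ℕ) [NeZero p] (n : ℕ) (hn : n ≤ p) :
    NN p n = 2 * Real.sin (n * (Real.pi / p)) := by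
  have hp : (0:ℝ) < p := by exact_mod_cast Nat.pos_of_neZero p
  unfold NN
  have := ZMod.stdAddChar_coe (N := p) (n : ℤ)
  rw [Int.cast_natCast] at this
  rw [this]
  have e : (2 * Real.pi * Complex.I * ((n:ℤ):ℂ) / p) = Complex.I * ((2 * Real.pi * n / p : ℝ) : ℂ) := by
    push_cast; ring
  rw [e, Complex.norm_exp_I_mul_ofReal_sub_one, show 2 * Real.pi * n / p / 2 = n * (Real.pi / p) by ring,
    Real.norm_of_nonneg]
  have : 0 ≤ Real.sin (n * (Real.pi / p)) := by
    apply Real.sin_nonneg_of_nonneg_of_le_pi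
    · positivity
    · have : (n:ℝ) ≤ p := by exact_mod_cast hn
      calc (n:ℝ) * (Real.pi/p) ≤ p * (Real.pi / p) := by gcongr
        _ = Real.pi := by field_simp
  positivity

lemma NN_eq (p : ℕ) [NeZero p] (t : ZMod p) :
    NN p t = 2 * Real.sin (t.valMinAbs.natAbs * (Real.pi / p)) := by
  have h := ZMod.natAbs_valMinAbs_le t
  rw [← NN_nat p _ (by omega)]
  rcases Int.natAbs_eq t.valMinAbs with h | h
  · have : ((t.valMinAbs.natAbs : ℕ) : ZMod p) = t := by
      conv_rhs => rw [← ZMod.coe_valMinAbs t, h]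
      simp
    rw [this]
  · have : ((t.valMinAbs.natAbs : ℕ) : ZMod p) = -t := by
      conv_rhs => rw [← ZMod.coe_valMinAbs t, h]
      simp
    rw [this, NN_neg]

lemma norm_sum_bset (p : ℕ) [NeZero p] (q : ℕ) (c : ℤ) (hq : q ≤ p) (r : ZMod p)
    (hr : (q : ZMod p) * r = 1) (k : ZMod p) :
    ‖∑ m ∈ bset p q c, (ZMod.stdAddChar (k * m) : ℂ)‖ * NN p (k * r) = NN p k := by
  rw [sum_bset p q c hq r hr]
  have h1 : ∀ j ∈ Finset.range q, (ZMod.stdAddChar (k * -(r * ((c : ZMod p) + (j : ZMod p)))) : ℂ)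
      = ZMod.stdAddChar (-(k * r * (c : ZMod p))) * (ZMod.stdAddChar (-(k * r))) ^ j := by
    intro j _
    rw [← AddChar.map_nsmul_eq_pow, ← AddChar.map_add_eq_mul]
    congr 1; rw [nsmul_eq_mul]; ring
  rw [Finset.sum_congr rfl h1, ← Finset.mul_sum, norm_mul, AddChar.norm_apply, one_mul,
    ← NN_neg p (k * r), ← NN_neg p k, NN, NN, ← norm_mul, geom_sum_mul,
    ← AddChar.map_nsmul_eq_pow]
  congr 3
  rw [nsmul_eq_mul]
  linear_combination (-k) * hr

lemma trig (p : ℕ) (hp : 11 ≤ p) (a b c : ℕ) (ha : 3 ≤ a) (hb : 3 ≤ b) (hc : 3 ≤ c)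
    (ha' : a ≤ p / 2) (hb' : b ≤ p / 2) (hc' : c ≤ p / 2) (hab : a ≠ b) (hac : a ≠ c) (hbc : b ≠ c) :
    1 / (2 * Real.sin (a * (Real.pi / p))) + 1 / (2 * Real.sin (b * (Real.pi / p)))
      + 1 / (2 * Real.sin (c * (Real.pi / p))) < 1 / (2 * Real.sin (Real.pi / p)) := by
  have hp0 : (0:ℝ) < p := by exact_mod_cast (by omega : 0 < p)
  have hp11 : (11:ℝ) ≤ p := by exact_mod_cast hp
  set x := Real.pi / p with hx
  have hx0 : 0 < x := by positivity
  have hx1 : x < 0.2857 := by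
    rw [hx, div_lt_iff₀ hp0]
    have := Real.pi_lt_d4
    nlinarith
  have hs0 : 0 < Real.sin x := Real.sin_pos_of_pos_of_lt_pi hx0 (by linarith [Real.pi_gt_three])
  have hsx : Real.sin x < x := Real.sin_lt hx0
  have hcx := Real.one_sub_sq_div_two_le_cos (x := x)
  have hsc := Real.sin_sq_add_cos_sq x
  set s := Real.sin x
  set d := Real.cos x
  have hs2 : s ^ 2 < 0.0817 := by nlinarith
  have hd : 0.959 < d := by nlinarith
  have b3 : 2.67 * s ≤ Real.sin (3 * x) := by
    rw [Real.sin_three_mul]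
    change 2.67 * s ≤ 3 * s - 4 * s ^ 3
    nlinarith
  have e4 : Real.sin (4 * x) = 4 * s * d * (1 - 2 * s ^ 2) := by
    rw [show 4 * x = 2 * (2 * x) by ring, Real.sin_two_mul, Real.sin_two_mul, Real.cos_two_mul,
      Real.cos_sq']
    change 2 * (2 * s * d) * (2 * (1 - s ^ 2) - 1) = _
    ring
  have b4 : 3.2 * s ≤ Real.sin (4 * x) := by
    rw [e4]
    have : 0.8 ≤ d * (1 - 2 * s ^ 2) := by nlinarith
    nlinarith
  have e5 : Real.sin (5 * x) = s * (5 - 20 * s ^ 2 + 16 * s ^ 4) := by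
    rw [show 5 * x = 3 * x + 2 * x by ring, Real.sin_add, Real.sin_two_mul, Real.cos_two_mul,
      Real.sin_three_mul, Real.cos_three_mul]
    change (3 * s - 4 * s ^ 3) * (2 * d ^ 2 - 1) + (4 * d ^ 3 - 3 * d) * (2 * s * d) = _
    have hd2 : d ^ 2 = 1 - s ^ 2 := by linarith
    have hd4 : d ^ 4 = (1 - s ^ 2) ^ 2 := by rw [← hd2]; ring
    linear_combination (2 * (3 * s - 4 * s ^ 3) - 6 * s) * hd2 + 8 * s * hd4
  have b5 : 3.36 * s ≤ Real.sin (5 * x) := by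
    rw [e5]
    have : 3.36 ≤ 5 - 20 * s ^ 2 + 16 * s ^ 4 := by nlinarith [sq_nonneg (s^2)]
    nlinarith
  have mono : ∀ m n : ℕ, m ≤ n → n ≤ p / 2 → Real.sin (m * x) ≤ Real.sin (n * x) := by
    intro m n hmn hn
    have h1 : (m:ℝ) * x ≤ n * x := by gcongr
    apply Real.sin_le_sin_of_le_of_le_pi_div_two _ _ h1
    · have : 0 ≤ (m:ℝ) * x := by positivity
      linarith [Real.pi_pos]
    · have : (n:ℝ) * 2 ≤ p := by exact_mod_cast (by omega : n * 2 ≤ p)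
      have h2 : (p:ℝ) * x = Real.pi := by rw [hx]; field_simp
      nlinarith
  have c3 : ∀ n : ℕ, 3 ≤ n → n ≤ p / 2 → 1 / (2 * Real.sin (n * x)) ≤ 0.3746 * (1 / (2 * s)) := by
    intro n h h'
    have := mono 3 n h h'
    push_cast at this
    rw [div_le_iff₀ (by linarith), mul_assoc, one_div_mul_eq_div, mul_div_assoc']
    rw [le_div_iff₀ (by positivity)]; nlinarith
  have c4 : ∀ n : ℕ, 4 ≤ n → n ≤ p / 2 → 1 / (2 * Real.sin (n * x)) ≤ 0.3125 * (1 / (2 * s)) := by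
    intro n h h'
    have := mono 4 n h h'
    push_cast at this
    rw [div_le_iff₀ (by linarith), mul_assoc, one_div_mul_eq_div, mul_div_assoc']
    rw [le_div_iff₀ (by positivity)]; nlinarith
  have c5 : ∀ n : ℕ, 5 ≤ n → n ≤ p / 2 → 1 / (2 * Real.sin (n * x)) ≤ 0.298 * (1 / (2 * s)) := by
    intro n h h'
    have := mono 5 n h h'
    push_cast at this
    rw [div_le_iff₀ (by linarith), mul_assoc, one_div_mul_eq_div, mul_div_assoc']
    rw [le_div_iff₀ (by positivity)]; nlinarith
  have hpos : 0 < 1 / (2 * s) := by positivity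
  have key : ∀ a b c : ℕ, 3 ≤ a → a < b → b < c → c ≤ p / 2 →
      1 / (2 * Real.sin (a * x)) + 1 / (2 * Real.sin (b * x)) + 1 / (2 * Real.sin (c * x))
       < 1 / (2 * s) := by
    intro a b c h1 h2 h3 h4
    have := c3 a h1 (by omega)
    have := c4 b (by omega) (by omega)
    have := c5 c (by omega) (by omega)
    linarith
  rcases lt_or_gt_of_ne hab with h1 | h1 <;> rcases lt_or_gt_of_ne hac with h2 | h2 <;>
    rcases lt_or_gt_of_ne hbc with h3 | h3
  · have := key a b c ha h1 h3 hc'; linarith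
  · have := key a c b ha h2 h3 hb'; linarith
  · omega
  · have := key c a b hc h2 h1 hb'; linarith
  · have := key b a c hb h1 h2 hc'; linarith
  · omega
  · have := key b c a hb h3 h2 ha'; linarith
  · have := key c b a hc h3 h1 ha'; linarith

lemma step (p : ℕ) [NeZero p] (hp : 11 ≤ p) (q : Fin 4 → ℕ) (hinj : Function.Injective q)
    (hpos : ∀ i, 0 < q i) (hsum : ∑ i, q i = p) (hg : ∀ i, Nat.Coprime (q i) p) (c : Fin 4 → ℤ)
    (hcov : ∀ m : ZMod p, ∃! i, m ∈ bset p (q i) (c i)) (i : Fin 4) :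
    ∃ j, (q i : ZMod p) = 2 * q j ∨ (q i : ZMod p) = -(2 * q j) := by
  have : Fact (1 < p) := ⟨by omega⟩
  have rot : ∀ (M : Type) [AddCommMonoid M] (F : Fin 4 → M), 
      ∑ j, F j = F i + (F (i+1) + F (i+2) + F (i+3)) := by
    intro M _ F
    rw [Fin.sum_univ_four]
    fin_cases i
    · change _ = F 0 + (F 1 + F 2 + F 3); abel
    · change _ = F 1 + (F 2 + F 3 + F 0); abel
    · change _ = F 2 + (F 3 + F 0 + F 1); abel
    · change _ = F 3 + (F 0 + F 1 + F 2); abel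
  have hle : ∀ i, q i ≤ p := fun i => by
    rw [← hsum]; exact Finset.single_le_sum (fun _ _ => Nat.zero_le _) (Finset.mem_univ i)
  set r : Fin 4 → ZMod p := fun j => (q j : ZMod p)⁻¹
  have hr : ∀ j, (q j : ZMod p) * r j = 1 := fun j => ZMod.coe_mul_inv_eq_one _ (hg j)
  have hs : ∀ a b, a ≠ b → q a + q b < p := by
    intro a b hab
    have h1 : q a + q b < ∑ i, q i := by
      rw [Fin.sum_univ_four]
      have := hpos 0; have := hpos 1; have := hpos 2; have := hpos 3
      fin_cases a <;> fin_cases b <;> simp at hab ⊢ <;> omega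
    omega
  -- distinctness
  have hne : ∀ a b, a ≠ b → (q a : ZMod p) ≠ q b := by
    intro a b hab h
    rw [ZMod.natCast_eq_natCast_iff', Nat.mod_eq_of_lt (by have := hs a b hab; omega),
      Nat.mod_eq_of_lt (by have := hs a b hab; omega)] at h
    exact hab (hinj h)
  have hne' : ∀ a b, a ≠ b → (q a : ZMod p) ≠ -q b := by
    intro a b hab h
    have h2 : ((q a + q b : ℕ) : ZMod p) = 0 := by push_cast; rw [h]; ring
    rw [ZMod.natCast_eq_zero_iff] at h2
    have := Nat.le_of_dvd (by have := hpos a; omega) h2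
    have := hs a b hab
    omega
  by_contra! hno
  set k : ZMod p := (q i : ZMod p)
  set n : Fin 4 → ℕ := fun j => (k * r j).valMinAbs.natAbs
  have hval : ∀ j, k * r j = (n j : ZMod p) ∨ k * r j = -(n j : ZMod p) := by
    intro j
    rcases Int.natAbs_eq (k * r j).valMinAbs with h | h
    · left
      conv_lhs => rw [← ZMod.coe_valMinAbs (k * r j), h]
      simp [n]
    · right
      conv_lhs => rw [← ZMod.coe_valMinAbs (k * r j), h]
      simp [n]
  have hk : ∀ j (u : ZMod p), k * r j = u → k = u * q j := by
    intro j u h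
    linear_combination (q j : ZMod p) * h - k * hr j
  have hcancel : ∀ j l, k * r j = k * r l → (q j : ZMod p) = q l := by
    intro j l h
    have h2 : r j = r l := by
      have := hr i
      linear_combination r i * h - (r j - r l) * this
    linear_combination (q j * q l : ZMod p) * (-h2) + (q l : ZMod p) * hr j - (q j : ZMod p) * hr l
  have hcancel' : ∀ j l, k * r j = -(k * r l) → (q j : ZMod p) = -q l := by
    intro j l h
    have h2 : r j = -r l := by
      have := hr i
      linear_combination r i * h - (r j + r l) * this
    linear_combination (q j * q l : ZMod p) * h2 - (q l : ZMod p) * hr j - (q j : ZMod p) * hr l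
  have hn3 : ∀ j, j ≠ i → 3 ≤ n j := by
    intro j hj
    by_contra! hlt
    have h := hval j
    have hq0 : k ≠ 0 := by
      intro h0
      have := hr i
      change k * r i = 1 at this
      rw [h0, zero_mul] at this
      exact zero_ne_one this
    interval_cases hnj : n j
    · rcases h with h | h <;> apply hq0 <;> rw [hk j _ h] <;> simp
    · rcases h with h | h
      · exact hne i j hj.symm (by simpa using hk j _ h)
      · exact hne' i j hj.symm (by simpa using hk j _ h)
    · rcases h with h | h
      · exact (hno j).1 (by simpa using hk j _ h)
      · exact (hno j).2 (by simpa using hk j _ h)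
  have hnn : ∀ j l, j ≠ l → n j ≠ n l := by
    intro j l hjl h
    have h1 := hval j
    have h2 := hval l
    rw [h] at h1
    rcases h1 with h1 | h1 <;> rcases h2 with h2 | h2
    · exact hne j l hjl (hcancel j l (by rw [h1, h2]))
    · exact hne' j l hjl (hcancel' j l (by rw [h1, h2, neg_neg]))
    · exact hne' j l hjl (hcancel' j l (by rw [h1, h2]))
    · exact hne j l hjl (hcancel j l (by rw [h1, h2]))
  have hnle : ∀ j, n j ≤ p / 2 := fun j => ZMod.natAbs_valMinAbs_le _
  have hi1 : i + 1 ≠ i := by fin_cases i <;> decide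
  have hi2 : i + 2 ≠ i := by fin_cases i <;> decide
  have hi3 : i + 3 ≠ i := by fin_cases i <;> decide
  have hi12 : i + 1 ≠ i + 2 := by fin_cases i <;> decide
  have hi13 : i + 1 ≠ i + 3 := by fin_cases i <;> decide
  have hi23 : i + 2 ≠ i + 3 := by fin_cases i <;> decide
  have ht := trig p hp _ _ _ (hn3 _ hi1) (hn3 _ hi2) (hn3 _ hi3) (hnle _) (hnle _) (hnle _)
    (hnn _ _ hi12) (hnn _ _ hi13) (hnn _ _ hi23)
  have hNN : ∀ j, 2 * Real.sin (n j * (Real.pi / p)) = NN p (k * r j) := fun j => (NN_eq p _).symm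
  have hN1 : 2 * Real.sin (Real.pi / p) = NN p (k * r i) := by
    have h1 : k * r i = ((1 : ℕ) : ZMod p) := by rw [Nat.cast_one]; exact hr i
    rw [h1, NN_nat p 1 (by omega)]; simp
  rw [hNN, hNN, hNN, hN1] at ht
  set F : Fin 4 → ℂ := fun j => ∑ m ∈ bset p (q j) (c j), (ZMod.stdAddChar (k * m) : ℂ)
  have hunit : ∀ (j : Fin 4) (u : ZMod p), u ≠ 0 → NN p u ≠ 0 := by
    intro j u hu h
    rw [NN, norm_eq_zero, sub_eq_zero] at h
    have := ZMod.injective_stdAddChar (N := p) (h.trans (AddChar.map_zero_eq_one _).symm)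
    exact hu this
  have hk0 : k ≠ 0 := by
    intro h0
    have := hr i
    change k * r i = 1 at this
    rw [h0, zero_mul] at this
    exact zero_ne_one this
  have hkr : ∀ j, k * r j ≠ 0 := by
    intro j h
    have := hk j 0 h
    rw [zero_mul] at this
    exact hk0 this
  have hF : ∀ j, ‖F j‖ = NN p k * (1 / NN p (k * r j)) := by
    intro j
    rw [mul_one_div, eq_div_iff (hunit j _ (hkr j))]
    exact norm_sum_bset p (q j) (c j) (hle j) (r j) (hr j) k
  have hF0 : ∑ j, F j = 0 := by
    have h1 : ∑ j, F j = ∑ m : ZMod p, (ZMod.stdAddChar (k * m) : ℂ) := by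
      have : ∀ j, F j = ∑ m : ZMod p, if m ∈ bset p (q j) (c j) then (ZMod.stdAddChar (k * m) : ℂ) else 0 := by
        intro j
        rw [← Finset.sum_filter]
        simp [F]
      simp_rw [this]
      rw [Finset.sum_comm]
      refine Finset.sum_congr rfl fun m _ => ?_
      obtain ⟨j, hj, hu⟩ := hcov m
      rw [Finset.sum_eq_single j]
      · simp [hj]
      · intro b _ hb
        rw [if_neg fun h => hb (hu b h)]
      · simp
    rw [h1]
    have := AddChar.sum_mulShift (ψ := ZMod.stdAddChar (N := p)) k (ZMod.isPrimitive_stdAddChar p)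
    rw [if_neg hk0] at this
    simpa [mul_comm] using this
  rw [rot ℂ F] at hF0
  have hFi : ‖F i‖ ≤ ‖F (i+1)‖ + ‖F (i+2)‖ + ‖F (i+3)‖ := by
    rw [eq_neg_of_add_eq_zero_left hF0, norm_neg]
    exact norm_add₃_le
  rw [hF, hF, hF, hF, ← mul_add, ← mul_add] at hFi
  have hkp : 0 < NN p k := lt_of_le_of_ne (norm_nonneg _) (hunit i k hk0).symm
  have := le_of_mul_le_mul_left hFi hkp
  linarith

set_option maxRecDepth 100000 in
lemma cycle : ∀ σ : Fin 4 → Fin 4, ∃ i, σ i = i ∨ σ (σ i) = i ∨ σ (σ (σ i)) = i ∨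
    σ (σ (σ (σ i))) = i := by decide

lemma final (p : ℕ) [NeZero p] (hp : 11 ≤ p) (q : Fin 4 → ℕ) (hg : ∀ i, Nat.Coprime (q i) p)
    (h : ∀ i, ∃ j, (q i : ZMod p) = 2 * q j ∨ (q i : ZMod p) = -(2 * q j)) : p = 15 ∨ p = 17 := by
  choose σ hσ using h
  obtain ⟨i, hi⟩ := cycle σ
  have hr : (q i : ZMod p) * (q i : ZMod p)⁻¹ = 1 := ZMod.coe_mul_inv_eq_one _ (hg i)
  have hz : ∀ N : ℕ, (N : ZMod p) * q i = 0 → p ∣ N := by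
    intro N h
    rw [← ZMod.natCast_eq_zero_iff]
    linear_combination (q i : ZMod p)⁻¹ * h - N * hr
  have fin : ∀ k : ℕ, 1 ≤ k → k ≤ 4 → ((q i : ZMod p) = 2 ^ k * q i ∨ (q i : ZMod p) = - (2 ^ k * q i)) →
      p = 15 ∨ p = 17 := by
    intro k h1 h4 hk
    have : p ∣ 2 ^ k - 1 ∨ p ∣ 2 ^ k + 1 := by
      rcases hk with hk | hk
      · left; apply hz
        rw [Nat.cast_sub Nat.one_le_two_pow]; push_cast
        linear_combination -hk
      · right; apply hz; push_cast
        linear_combination hk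
    interval_cases k <;> rcases this with h | h <;> have hl := Nat.le_of_dvd (by norm_num) h <;>
      norm_num at h hl <;> first | omega | (interval_cases p <;> omega)
  have s1 := hσ i
  have s2 := hσ (σ i)
  have s3 := hσ (σ (σ i))
  have s4 := hσ (σ (σ (σ i)))
  have t2 : (q i : ZMod p) = 2 ^ 2 * q (σ (σ i)) ∨ (q i : ZMod p) = -(2 ^ 2 * q (σ (σ i))) := by
    rcases s1 with a | a <;> rcases s2 with b | b <;> rw [a, b]
    · left; ring
    · right; ring
    · right; ring
    · left; ring
  have t3 : (q i : ZMod p) = 2 ^ 3 * q (σ (σ (σ i))) ∨ (q i : ZMod p) = -(2 ^ 3 * q (σ (σ (σ i)))) := by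
    rcases t2 with a | a <;> rcases s3 with b | b <;> rw [a, b]
    · left; ring
    · right; ring
    · right; ring
    · left; ring
  have t4 : (q i : ZMod p) = 2 ^ 4 * q (σ (σ (σ (σ i)))) ∨
      (q i : ZMod p) = -(2 ^ 4 * q (σ (σ (σ (σ i))))) := by
    rcases t3 with a | a <;> rcases s4 with b | b <;> rw [a, b]
    · left; ring
    · right; ring
    · right; ring
    · left; ring
  rcases hi with hi | hi | hi | hi
  · exact fin 1 (by norm_num) (by norm_num) (by rw [hi] at s1; simpa using s1)
  · exact fin 2 (by norm_num) (by norm_num) (by rw [hi] at t2; exact t2)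
  · exact fin 3 (by norm_num) (by norm_num) (by rw [hi] at t3; exact t3)
  · exact fin 4 (by norm_num) (by norm_num) (by rw [hi] at t4; exact t4)

theorem fraenkel_four_q1_eq_two_q2 (p q1 q2 q3 q4 : ℕ) (hp : 0 < p)
    (h12 : q2 < q1) (h23 : q3 < q2) (h34 : q4 < q3) (h4 : 1 ≤ q4)
    (hg1 : Nat.gcd p q1 = 1) (hg2 : Nat.gcd p q2 = 1)
    (hg3 : Nat.gcd p q3 = 1) (hg4 : Nat.gcd p q4 = 1)
    (β : Fin 4 → ℝ)
    (hcov : ∀ m : ℤ, ∃! i : Fin 4,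
      m ∈ beattySet ((p : ℝ) / ((![q1, q2, q3, q4] i : ℕ) : ℝ)) (β i)) :
    q1 = 2 * q2 := by
  have : NeZero p := ⟨hp.ne'⟩
  set q : Fin 4 → ℕ := ![q1, q2, q3, q4] with hq
  have e0 : q 0 = q1 := rfl
  have e1 : q 1 = q2 := rfl
  have e2 : q 2 = q3 := rfl
  have e3 : q 3 = q4 := rfl
  have hpos : ∀ i, 0 < q i := by
    intro i; fin_cases i <;> simp [q] <;> omega
  have hinj : Function.Injective q := by
    intro a b hab
    fin_cases a <;> fin_cases b <;> simp [q] at hab ⊢ <;> omega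
  have hg : ∀ i, Nat.Coprime (q i) p := by
    intro i
    rw [Nat.coprime_comm]
    fin_cases i
    · exact hg1
    · exact hg2
    · exact hg3
    · exact hg4
  set c : Fin 4 → ℤ := fun i => ⌈-((q i : ℝ) * β i)⌉
  have hmem : ∀ (m : ℤ) i, m ∈ beattySet ((p : ℝ) / ((q i : ℕ) : ℝ)) (β i) ↔
      (m : ZMod p) ∈ bset p (q i) (c i) := by
    intro m i
    rw [mem_beatty p (q i) hp (hpos i), mem_bset]
  have hcov' : ∀ m : ZMod p, ∃! i, m ∈ bset p (q i) (c i) := by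
    intro m
    obtain ⟨m, rfl⟩ := ZMod.intCast_surjective m
    simpa only [hmem] using hcov m
  have hlt : ∀ i, q i ≤ p := by
    intro i
    by_contra! h
    have hall : ∀ m : ZMod p, m ∈ bset p (q i) (c i) := by
      intro m
      simp only [bset, Finset.mem_filter, Finset.mem_univ, true_and]
      exact (ZMod.val_lt _).trans h
    have hm : (⌊β (i+1)⌋ : ℤ) ∈ beattySet ((p : ℝ) / ((q (i+1) : ℕ) : ℝ)) (β (i+1)) :=
      ⟨0, by simp⟩
    have := (hcov' _).unique ((hmem _ _).1 hm) (hall _)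
    revert this
    fin_cases i <;> decide
  have hsum : ∑ i, q i = p := by
    have h1 : ∀ j, ∑ m ∈ bset p (q j) (c j), (1:ℂ) = q j := by
      intro j
      rw [sum_bset p (q j) (c j) (hlt j) _ (ZMod.coe_mul_inv_eq_one _ (hg j)) (fun _ => 1)]
      simp
    have h2 : ∑ j, ∑ m ∈ bset p (q j) (c j), (1:ℂ) = ∑ m : ZMod p, 1 := by
      have : ∀ j, ∑ m ∈ bset p (q j) (c j), (1:ℂ) =
          ∑ m : ZMod p, if m ∈ bset p (q j) (c j) then (1:ℂ) else 0 := by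
        intro j
        rw [← Finset.sum_filter]
        simp
      simp_rw [this]
      rw [Finset.sum_comm]
      refine Finset.sum_congr rfl fun m _ => ?_
      obtain ⟨j, hj, hu⟩ := hcov' m
      rw [Finset.sum_eq_single j]
      · simp [hj]
      · intro b _ hb
        rw [if_neg fun h => hb (hu b h)]
      · simp
    simp_rw [h1] at h2
    simp only [Finset.sum_const, Finset.card_univ, ZMod.card, nsmul_eq_mul, mul_one] at h2
    exact_mod_cast h2
  have hs4 : q1 + q2 + q3 + q4 = p := by
    rw [← hsum, Fin.sum_univ_four, e0, e1, e2, e3]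
  have hp11 : 11 ≤ p := by
    by_contra! h
    obtain rfl : p = 10 := by omega
    obtain rfl : q3 = 2 := by omega
    norm_num at hg3
  have hst := step p hp11 q hinj hpos hsum hg c hcov'
  clear hcov hcov' hmem
  rcases final p hp11 q hg hst with h15 | h17
  · have b4 : q4 ≤ 2 := by omega
    have b3 : q3 ≤ 4 := by omega
    have b2 : q2 ≤ 6 := by omega
    clear_value q c
    subst h15
    obtain rfl : q1 = 15 - q2 - q3 - q4 := by omega
    clear hst hsum hlt e0 e1 e2 e3 hg hq
    interval_cases q4 <;> interval_cases q3 <;> interval_cases q2 <;> first | omega | simp_all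
  · exfalso
    subst h17
    have hd : ∀ i, ∃ j, (q i : ZMod 17) = 2 * q j ∨ (q i : ZMod 17) = -(2 * q j) := hst
    have b4 : q4 ≤ 2 := by omega
    have b3 : q3 ≤ 4 := by omega
    have b2 : q2 ≤ 7 := by omega
    have e : q1 = 17 - q2 - q3 - q4 := by omega
    rw [hq, e] at hd
    rw [e] at h12
    clear hst hsum hlt e0 e1 e2 e3 hg hpos hinj hg1 hg2 hg3 hg4 hs4 e
    clear_value c q
    subst hq
    revert hd
    interval_cases q4 <;> interval_cases q3 <;> interval_cases q2 <;> first | omega | decide
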